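/- arXiv:1607.00714 — 6 statements merged into one kernel-verified Lean document; each statement's English description precedes it below -/
import Mathlib

section
/- For every α ∈ [0,1] and every cache configuration c ∈ C_n(m), the flat product-form distribution π_F satisfies the global balance equation of the flat-architecture cache-replacement chain: π_F(c)·(1 − Σ_{j∈c_{h_N}} p_j − Σ_{j∈c_h} p_j) = (1−α)·Σ_{k in list 0} Σ_{u∈c_1} π_F(c_{k→(1,u)})·p_u/m_1 + α·Σ_{k in list 0} Σ_{u∈c_{h_N+1}} π_F(c_{k→(h_N+1,u)})·p_u/m_{h_N+1} + Σ_{i∈{1,…,h−1}\{h_N}} Σ_{u∈c_i} Σ_{v∈c_{i+1}} π_F(c_{(i,u)↔(i+1,v)})·p_v/m_{i+1}. -/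
/-!
The balance equation splits term by term. If `ht j = ht i + 1`, exchanging `u ∈ c_i` with
`v ∈ c_j` multiplies the weight by `p_u / p_v`, so `π(c_{(i,u)↔(j,v)}) p_v = π(c) p_u`
(`configWeight_swapPages`). Averaging over the `m_j` pages `v ∈ c_j` leaves `π(c) ∑_{u ∈ c_i} p_u`
(`sum_piDist_swapPages`). In the flat architecture the height increases by one along `0 → 1`,
`0 → h_N + 1`, and `i → i + 1` for `i ≠ h_N`; the first two terms, with coefficients `1 - α` and `α`,
combine to the mass of list 0. The right-hand side is therefore `π(c)` times the total popularity
of all lists other than `h_N` and `h`, and the total popularity of all lists is `1`.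
-/

open Finset

/-- A cache configuration: lists are indexed by `Fin (h+1)`, index `0` being "list 0"
(the storage layer / pages in no cache list), indices `1,…,h` the cache lists.
Lists are pairwise disjoint, list `i ≠ 0` has `m i` pages, and all pages are covered. -/
def IsCacheConfig (n h : ℕ) (m : Fin (h+1) → ℕ) (c : Fin (h+1) → Finset (Fin n)) : Prop :=
  (∀ i, i ≠ 0 → (c i).card = m i) ∧
  (∀ i j, i ≠ j → Disjoint (c i) (c j)) ∧
  Finset.univ.biUnion c = Finset.univ

open scoped Classical in
/-- The finite set `C_n(m)` of all cache configurations. -/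
noncomputable def cacheConfigs (n h : ℕ) (m : Fin (h+1) → ℕ) :
    Finset (Fin (h+1) → Finset (Fin n)) :=
  Finset.univ.filter (IsCacheConfig n h m)

/-- Exchange a page of list `i` with a page of list `j`:
`swapPages c i j u v` moves `v` into list `i` (replacing `u`, which moves to list `j`,
replacing `v`).  For `i = 0` this is the replacement operation `c_{u→(j,v)}`
moving page `u` of list 0 into list `j` in place of `v`. -/
def swapPages (n h : ℕ) (c : Fin (h+1) → Finset (Fin n)) (i j : Fin (h+1)) (u v : Fin n) :
    Fin (h+1) → Finset (Fin n) :=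
  fun l => if l = i then insert v ((c i).erase u)
           else if l = j then insert u ((c j).erase v) else c l

/-- Unnormalized product-form weight `∏_i (∏_{j∈c_i} p_j)^{ht(i)}` (note `ht 0 = 0`). -/
noncomputable def configWeight (n h : ℕ) (p : Fin n → ℝ) (ht : Fin (h+1) → ℕ)
    (c : Fin (h+1) → Finset (Fin n)) : ℝ :=
  ∏ i, (∏ j ∈ c i, p j) ^ ht i

/-- The product-form distribution `π(c) = weight(c)/Z`. -/
noncomputable def piDist (n h : ℕ) (m : Fin (h+1) → ℕ) (p : Fin n → ℝ) (ht : Fin (h+1) → ℕ)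
    (c : Fin (h+1) → Finset (Fin n)) : ℝ :=
  configWeight n h p ht c / ∑ c' ∈ cacheConfigs n h m, configWeight n h p ht c'

/-- Flat height function: `ht_F(i) = i` for `i ≤ h_N`, `ht_F(i) = i − h_N` for `i > h_N`. -/
def htFlat (h hN : ℕ) : Fin (h+1) → ℕ :=
  fun i => if i.val ≤ hN then i.val else i.val - hN

theorem configWeight_swapPages (n h : ℕ) (p : Fin n → ℝ) (ht : Fin (h+1) → ℕ)
    (c : Fin (h+1) → Finset (Fin n)) (hd : ∀ i j, i ≠ j → Disjoint (c i) (c j))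
    (i j : Fin (h+1)) (hij : i ≠ j) (hht : ht j = ht i + 1)
    (u v : Fin n) (hu : u ∈ c i) (hv : v ∈ c j) :
    configWeight n h p ht (swapPages n h c i j u v) * p v = configWeight n h p ht c * p u := by
  have hui : u ∉ (c j).erase v := fun hx =>
    Finset.disjoint_left.mp (hd i j hij) hu (Finset.mem_of_mem_erase hx)
  have hvi : v ∉ (c i).erase u := fun hx =>
    Finset.disjoint_left.mp (hd i j hij) (Finset.mem_of_mem_erase hx) hv
  have hj : j ∈ (Finset.univ : Finset (Fin (h+1))).erase i := by simp [hij.symm]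
  unfold configWeight
  rw [← Finset.mul_prod_erase _ _ (Finset.mem_univ i), ← Finset.mul_prod_erase _ _ hj,
    ← Finset.mul_prod_erase _ (fun l => (∏ x ∈ c l, p x) ^ ht l) (Finset.mem_univ i),
    ← Finset.mul_prod_erase _ (fun l => (∏ x ∈ c l, p x) ^ ht l) hj]
  have hrest : ∏ l ∈ (Finset.univ.erase i).erase j,
        (∏ x ∈ swapPages n h c i j u v l, p x) ^ ht l
      = ∏ l ∈ (Finset.univ.erase i).erase j, (∏ x ∈ c l, p x) ^ ht l := by
    refine Finset.prod_congr rfl fun l hl => ?_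
    simp only [Finset.mem_erase] at hl
    simp [swapPages, hl.1, hl.2.1]
  have hi' : swapPages n h c i j u v i = insert v ((c i).erase u) := by simp [swapPages]
  have hj' : swapPages n h c i j u v j = insert u ((c j).erase v) := by
    simp [swapPages, hij.symm]
  rw [hrest, hi', hj', Finset.prod_insert hvi, Finset.prod_insert hui,
    ← Finset.mul_prod_erase (c i) p hu, ← Finset.mul_prod_erase (c j) p hv, hht]
  simp only [mul_pow, pow_succ]
  ring

theorem sum_piDist_swapPages (n h : ℕ) (m : Fin (h+1) → ℕ) (p : Fin n → ℝ) (ht : Fin (h+1) → ℕ)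
    (c : Fin (h+1) → Finset (Fin n)) (hd : ∀ i j, i ≠ j → Disjoint (c i) (c j))
    (i j : Fin (h+1)) (hij : i ≠ j) (hht : ht j = ht i + 1)
    (hcard : (c j).card = m j) (hmj : 0 < m j) :
    ∑ u ∈ c i, ∑ v ∈ c j, piDist n h m p ht (swapPages n h c i j u v) * p v / (m j : ℝ)
      = piDist n h m p ht c * ∑ u ∈ c i, p u := by
  rw [Finset.mul_sum]
  refine Finset.sum_congr rfl fun u hu => ?_
  have hm0 : (m j : ℝ) ≠ 0 := by positivity
  have hterm : ∀ v ∈ c j, piDist n h m p ht (swapPages n h c i j u v) * p v / (m j : ℝ)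
      = piDist n h m p ht c * p u / (m j : ℝ) := by
    intro v hv
    unfold piDist
    rw [div_mul_eq_mul_div, configWeight_swapPages n h p ht c hd i j hij hht u v hu hv,
      div_mul_eq_mul_div]
  rw [Finset.sum_congr rfl hterm, Finset.sum_const, hcard, nsmul_eq_mul]
  field_simp

/-- the flat product-form distribution satisfies the global balance equation
of the flat-architecture cache-replacement chain. -/
theorem flat_global_balance
    (n h hN : ℕ) (hn : 2 ≤ n) (hh : 2 ≤ h) (hN1 : 1 ≤ hN) (hNh : hN < h)
    (p : Fin n → ℝ) (hp : ∀ k, 0 < p k) (hpsum : ∑ k, p k = 1)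
    (m : Fin (h+1) → ℕ) (hm : ∀ i, i ≠ 0 → 0 < m i)
    (hmn : ∑ i ∈ Finset.univ.filter (fun i : Fin (h+1) => i ≠ 0), m i < n)
    (α : ℝ) (hα0 : 0 ≤ α) (hα1 : α ≤ 1)
    (c : Fin (h+1) → Finset (Fin n)) (hc : c ∈ cacheConfigs n h m) :
    piDist n h m p (htFlat h hN) c *
        (1 - (∑ j ∈ c ⟨hN, by omega⟩, p j) - ∑ j ∈ c ⟨h, by omega⟩, p j) =
      (1 - α) * (∑ k ∈ c 0, ∑ u ∈ c ⟨1, by omega⟩,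
          piDist n h m p (htFlat h hN) (swapPages n h c 0 ⟨1, by omega⟩ k u) * p u
            / (m ⟨1, by omega⟩ : ℝ))
      + α * (∑ k ∈ c 0, ∑ u ∈ c ⟨hN + 1, by omega⟩,
          piDist n h m p (htFlat h hN) (swapPages n h c 0 ⟨hN + 1, by omega⟩ k u) * p u
            / (m ⟨hN + 1, by omega⟩ : ℝ))
      + ∑ i ∈ Finset.univ.filter (fun i : Fin (h+1) => 1 ≤ i.val ∧ i.val < h ∧ i.val ≠ hN),
          ∑ u ∈ c i, ∑ v ∈ c (i + 1),
            piDist n h m p (htFlat h hN) (swapPages n h c i (i + 1) u v) * p v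
              / (m (i + 1) : ℝ) := by
  obtain ⟨hcard, hd, hcov⟩ : IsCacheConfig n h m c := by simpa [cacheConfigs] using hc
  have key := sum_piDist_swapPages n h m p (htFlat h hN) c hd
  have h1 : (⟨1, by omega⟩ : Fin (h+1)) ≠ 0 := by simp [Fin.ext_iff]
  have hN1' : (⟨hN + 1, by omega⟩ : Fin (h+1)) ≠ 0 := by simp [Fin.ext_iff]
  rw [key 0 ⟨1, by omega⟩ h1.symm (by simp [htFlat, hN1]) (hcard _ h1) (hm _ h1),
    key 0 ⟨hN + 1, by omega⟩ hN1'.symm (by simp [htFlat]) (hcard _ hN1') (hm _ hN1')]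
  have hsum : ∀ i ∈ Finset.univ.filter
      (fun i : Fin (h+1) => 1 ≤ i.val ∧ i.val < h ∧ i.val ≠ hN),
      ∑ u ∈ c i, ∑ v ∈ c (i + 1),
            piDist n h m p (htFlat h hN) (swapPages n h c i (i + 1) u v) * p v
              / (m (i + 1) : ℝ) = piDist n h m p (htFlat h hN) c * ∑ u ∈ c i, p u := by
    intro i hi
    simp only [Finset.mem_filter, Finset.mem_univ, true_and] at hi
    -- `i < h`, so the addition `i + 1` in `Fin (h+1)` does not wrap around.
    have hv : (i + 1).val = i.val + 1 :=
      Fin.val_add_one_of_lt (Fin.lt_def.mpr (by simpa using hi.2.1))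
    have h0 : i + 1 ≠ 0 := by
      intro h0
      rw [h0] at hv
      simp at hv
    have hne : i ≠ i + 1 := by
      intro h0
      rw [← h0] at hv
      omega
    refine key i (i + 1) hne ?_ (hcard _ h0) (hm _ h0)
    simp only [htFlat, hv]
    split_ifs <;> omega
  rw [Finset.sum_congr rfl hsum, ← Finset.mul_sum]
  have htot : ∑ i, ∑ j ∈ c i, p j = 1 := by
    rw [← hpsum, ← hcov, Finset.sum_biUnion]
    intro i _ j _ hij
    exact hd i j hij
  have hcompl : Finset.univ.filter
      (fun i : Fin (h+1) => ¬ (1 ≤ i.val ∧ i.val < h ∧ i.val ≠ hN))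
      = {0, ⟨hN, by omega⟩, ⟨h, by omega⟩} := by
    ext i
    have := i.isLt
    simp only [Finset.mem_filter, Finset.mem_univ, true_and, Finset.mem_insert,
      Finset.mem_singleton, Fin.ext_iff, Fin.val_zero]
    omega
  rw [← Finset.sum_filter_add_sum_filter_not Finset.univ
    (fun i : Fin (h+1) => 1 ≤ i.val ∧ i.val < h ∧ i.val ≠ hN), hcompl,
    Finset.sum_insert (by simp [Fin.ext_iff]; omega),
    Finset.sum_insert (by simp [Fin.ext_iff]; omega), Finset.sum_singleton] at htot
  linear_combination -(piDist n h m p (htFlat h hN) c) * htot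
end

section
/- Let π: C_n(m) → (0,∞) be a probability distribution (Σ_{c∈C_n(m)} π(c) = 1). Then π satisfies the flat exchange conditions (*F) if and only if π(c) = Z_F^{-1} ∏_{i=1}^h (∏_{j∈c_i} p_j)^{ht_F(i)} for every c ∈ C_n(m), where Z_F = Σ_{c'∈C_n(m)} ∏_{i=1}^h (∏_{j∈c'_i} p_j)^{ht_F(i)}. -/
/-!
A configuration is the same thing as a labelling `f : Fin n → Fin (h+1)` of the pages by their
lists (`labelConfig`), and exchanging two pages is precomposition of `f` with a transposition.
In these terms the product-form weight is `∏ k, p k ^ ht (f k)`, so exchanging `u` and `v` between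
lists whose heights differ by one multiplies the weight by `p u / p v`
(`labelWeight_swap_of_ht`). Hence the product form satisfies the exchange conditions, and
conversely the exchange conditions say exactly that `r = π / weight` is invariant under the
exchanges they mention.

The pairs of lists appearing in the conditions form the path `h_N, …, 1, 0, h_N + 1, …, h`, which
connects all lists. Since every list is nonempty in every configuration, an exchange between lists
`i` and `k` can be routed through a page of an intermediate list `j`, so being an
`r`-invariant pair of lists is a transitive relation (`SwapInvariant.trans`). Thus `r` is invariant
under all transpositions, hence under all permutations of the pages; and any two configurations
differ by a permutation of the pages, as their lists have equal sizes. So `r` is constant, and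
normalization determines the constant.
-/

open Finset

/-! ### Configurations as labellings of pages -/

/-- The configuration in which page `k` lies in list `f k`. -/
def labelConfig {n h : ℕ} (f : Fin n → Fin (h+1)) : Fin (h+1) → Finset (Fin n) :=
  fun i => Finset.univ.filter (fun k => f k = i)

lemma mem_labelConfig {n h : ℕ} (f : Fin n → Fin (h+1)) (i : Fin (h+1)) (k : Fin n) :
    k ∈ labelConfig f i ↔ f k = i := by
  simp [labelConfig]

lemma exists_label {n h : ℕ} {m : Fin (h+1) → ℕ} {c : Fin (h+1) → Finset (Fin n)}
    (hc : c ∈ cacheConfigs n h m) : ∃ f, c = labelConfig f := by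
  simp only [cacheConfigs, Finset.mem_filter, IsCacheConfig] at hc
  obtain ⟨-, -, hd, hu⟩ := hc
  have hex : ∀ k, ∃ i, k ∈ c i := by
    intro k
    have : k ∈ Finset.univ.biUnion c := by rw [hu]; exact Finset.mem_univ k
    simpa using this
  choose f hf using hex
  refine ⟨f, ?_⟩
  funext i
  ext k
  rw [mem_labelConfig]
  constructor
  · intro hk
    by_contra hne
    exact Finset.disjoint_left.mp (hd _ _ hne) (hf k) hk
  · rintro rfl
    exact hf k

lemma labelConfig_mem {n h : ℕ} {m : Fin (h+1) → ℕ} (f : Fin n → Fin (h+1)) :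
    labelConfig f ∈ cacheConfigs n h m ↔ ∀ i, i ≠ 0 → (labelConfig f i).card = m i := by
  simp only [cacheConfigs, Finset.mem_filter, IsCacheConfig, Finset.mem_univ, true_and]
  refine ⟨fun hc => hc.1, fun hc => ⟨hc, ?_, ?_⟩⟩
  · intro i j hij
    rw [Finset.disjoint_left]
    intro k hi hj
    rw [mem_labelConfig] at hi hj
    exact hij (hi.symm.trans hj)
  · ext k
    simp [mem_labelConfig]

lemma card_labelConfig_comp {n h : ℕ} (f : Fin n → Fin (h+1)) (σ : Equiv.Perm (Fin n))
    (i : Fin (h+1)) : (labelConfig (f ∘ σ) i).card = (labelConfig f i).card := by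
  refine Finset.card_equiv σ fun k => ?_
  simp [mem_labelConfig]

lemma comp_mem {n h : ℕ} {m : Fin (h+1) → ℕ} {f : Fin n → Fin (h+1)} (σ : Equiv.Perm (Fin n))
    (hf : labelConfig f ∈ cacheConfigs n h m) : labelConfig (f ∘ σ) ∈ cacheConfigs n h m := by
  rw [labelConfig_mem] at hf ⊢
  intro i hi
  rw [card_labelConfig_comp, hf i hi]

lemma swapPages_labelConfig {n h : ℕ} (f : Fin n → Fin (h+1)) {u v : Fin n} (huv : f u ≠ f v) :
    swapPages n h (labelConfig f) (f u) (f v) u v = labelConfig (f ∘ Equiv.swap u v) := by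
  have huv' : u ≠ v := fun e => huv (congrArg f e)
  funext l
  ext k
  rw [mem_labelConfig]
  simp only [swapPages, Function.comp]
  by_cases hku : k = u
  · subst hku
    rw [Equiv.swap_apply_left]
    split_ifs with h1 h2 <;> simp_all [mem_labelConfig, eq_comm]
  by_cases hkv : k = v
  · subst hkv
    rw [Equiv.swap_apply_right]
    split_ifs with h1 h2 <;> simp_all [mem_labelConfig, eq_comm]
  rw [Equiv.swap_apply_of_ne_of_ne hku hkv]
  split_ifs with h1 h2 <;> simp_all [mem_labelConfig]

lemma card_zero_add {n h : ℕ} (f : Fin n → Fin (h+1)) :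
    (labelConfig f 0).card
      + ∑ i ∈ Finset.univ.filter (fun i : Fin (h+1) => i ≠ 0), (labelConfig f i).card = n := by
  have h1 : ∑ i, (labelConfig f i).card = n := by
    have := Finset.card_eq_sum_card_fiberwise (s := (Finset.univ : Finset (Fin n)))
      (t := Finset.univ) (f := f) (fun _ _ => Finset.mem_coe.2 (Finset.mem_univ _))
    simpa [labelConfig] using this.symm
  rw [← Finset.add_sum_erase _ _ (Finset.mem_univ (0 : Fin (h+1)))] at h1
  rwa [Finset.filter_ne']

/-- List `0` holds whatever the cache lists leave over, so its size is determined as well. -/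
lemma card_zero_eq {n h : ℕ} {m : Fin (h+1) → ℕ} {f : Fin n → Fin (h+1)}
    (hf : labelConfig f ∈ cacheConfigs n h m) :
    (labelConfig f 0).card + ∑ i ∈ Finset.univ.filter (fun i : Fin (h+1) => i ≠ 0), m i = n := by
  have h1 := card_zero_add f
  rw [labelConfig_mem] at hf
  rwa [Finset.sum_congr rfl fun i hi => hf i (Finset.mem_filter.1 hi).2] at h1

lemma label_surjective {n h : ℕ} {m : Fin (h+1) → ℕ} (hm : ∀ i, i ≠ 0 → 0 < m i)
    (hmn : ∑ i ∈ Finset.univ.filter (fun i : Fin (h+1) => i ≠ 0), m i < n)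
    {f : Fin n → Fin (h+1)} (hf : labelConfig f ∈ cacheConfigs n h m) (i : Fin (h+1)) :
    ∃ k, f k = i := by
  have hpos : 0 < (labelConfig f i).card := by
    by_cases hi : i = 0
    · subst hi
      have := card_zero_eq hf
      omega
    · rw [(labelConfig_mem f).1 hf i hi]
      exact hm i hi
  obtain ⟨k, hk⟩ := Finset.card_pos.1 hpos
  exact ⟨k, (mem_labelConfig f i k).1 hk⟩

lemma exists_perm {n h : ℕ} {m : Fin (h+1) → ℕ} {f g : Fin n → Fin (h+1)}
    (hf : labelConfig f ∈ cacheConfigs n h m) (hg : labelConfig g ∈ cacheConfigs n h m) :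
    ∃ σ : Equiv.Perm (Fin n), g = f ∘ σ := by
  have hcard : ∀ i, (labelConfig g i).card = (labelConfig f i).card := by
    intro i
    by_cases hi : i = 0
    · subst hi
      have h1 := card_zero_eq hf
      have h2 := card_zero_eq hg
      omega
    · rw [(labelConfig_mem f).1 hf i hi, (labelConfig_mem g).1 hg i hi]
  have hE : ∀ i, Nonempty ({a // g a = i} ≃ {a // f a = i}) := by
    intro i
    refine ⟨Fintype.equivOfCardEq ?_⟩
    rw [Fintype.card_subtype, Fintype.card_subtype]
    exact hcard i
  have e := fun i => (hE i).some
  refine ⟨Equiv.ofFiberEquiv e, ?_⟩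
  funext a
  exact (Equiv.ofFiberEquiv_map e a).symm

/-! ### Effect of an exchange on the weight -/

lemma configWeight_labelConfig {n h : ℕ} (p : Fin n → ℝ) (ht : Fin (h+1) → ℕ)
    (f : Fin n → Fin (h+1)) :
    configWeight n h p ht (labelConfig f) = ∏ k, p k ^ ht (f k) := by
  rw [← Finset.prod_fiberwise (s := Finset.univ) (g := f)]
  unfold configWeight labelConfig
  refine Finset.prod_congr rfl fun i _ => ?_
  rw [← Finset.prod_pow]
  refine Finset.prod_congr rfl fun k hk => ?_
  rw [(Finset.mem_filter.1 hk).2]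

lemma configWeight_labelConfig_pos {n h : ℕ} {p : Fin n → ℝ} (hp : ∀ k, 0 < p k)
    (ht : Fin (h+1) → ℕ) (f : Fin n → Fin (h+1)) :
    0 < configWeight n h p ht (labelConfig f) := by
  rw [configWeight_labelConfig]
  exact Finset.prod_pos fun k _ => pow_pos (hp k) _

/-- Moving `u` one level up and `v` one level down multiplies the weight by `p u / p v`. -/
lemma labelWeight_swap_of_ht {n h : ℕ} {p : Fin n → ℝ}
    (ht : Fin (h+1) → ℕ) (f : Fin n → Fin (h+1)) {u v : Fin n} (hht : ht (f v) = ht (f u) + 1) :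
    configWeight n h p ht (labelConfig (f ∘ Equiv.swap u v)) * p v
      = configWeight n h p ht (labelConfig f) * p u := by
  have huv : u ≠ v := by
    rintro rfl
    omega
  have hv : v ∈ Finset.univ.erase u := Finset.mem_erase.2 ⟨huv.symm, Finset.mem_univ v⟩
  rw [configWeight_labelConfig, configWeight_labelConfig,
    ← Finset.mul_prod_erase _ _ (Finset.mem_univ u), ← Finset.mul_prod_erase _ _ hv,
    ← Finset.mul_prod_erase Finset.univ (fun k => p k ^ ht (f k)) (Finset.mem_univ u),
    ← Finset.mul_prod_erase _ (fun k => p k ^ ht (f k)) hv]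
  have hrest : ∏ k ∈ (Finset.univ.erase u).erase v, p k ^ ht ((f ∘ Equiv.swap u v) k)
      = ∏ k ∈ (Finset.univ.erase u).erase v, p k ^ ht (f k) := by
    refine Finset.prod_congr rfl fun k hk => ?_
    simp only [Finset.mem_erase] at hk
    rw [Function.comp, Equiv.swap_apply_of_ne_of_ne hk.2.1 hk.1]
  rw [hrest]
  simp only [Function.comp, Equiv.swap_apply_left, Equiv.swap_apply_right, hht]
  ring

/-! ### Functions invariant under exchanges -/

/-- The function `r` of labellings does not change when two pages are exchanged between lists
`i` and `j` of a labelling satisfying `V`. -/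
def SwapInvariant {α β : Type*} [DecidableEq α] (V : (α → β) → Prop) (r : (α → β) → ℝ)
    (i j : β) : Prop :=
  ∀ f, V f → ∀ u v, f u = i → f v = j → r (f ∘ Equiv.swap u v) = r f

lemma comp_swap_eq_self {α β : Type*} [DecidableEq α] {f : α → β} {u v : α} (huv : f u = f v) :
    f ∘ Equiv.swap u v = f := by
  funext k
  simp only [Function.comp, Equiv.swap_apply_def]
  split_ifs with h1 h2
  · rw [h1, huv]
  · rw [h2, huv]
  · rfl

lemma SwapInvariant.refl {α β : Type*} [DecidableEq α] (V : (α → β) → Prop) (r : (α → β) → ℝ)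
    (i : β) : SwapInvariant V r i i := by
  intro f _ u v hu hv
  rw [comp_swap_eq_self (hu.trans hv.symm)]

lemma SwapInvariant.symm {α β : Type*} [DecidableEq α] {V : (α → β) → Prop} {r : (α → β) → ℝ}
    {i j : β} (hij : SwapInvariant V r i j) : SwapInvariant V r j i := by
  intro f hf u v hu hv
  rw [Equiv.swap_comm]
  exact hij f hf v u hv hu

/-- An exchange between lists `i` and `k` is a composite of three exchanges along
`i — j — k`, through any page `w` of list `j`. -/
lemma SwapInvariant.trans {α β : Type*} [DecidableEq α] {V : (α → β) → Prop} {r : (α → β) → ℝ}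
    (hV : ∀ f (σ : Equiv.Perm α), V f → V (f ∘ σ)) (hsurj : ∀ f, V f → ∀ j, ∃ w, f w = j)
    {i j k : β} (hij : SwapInvariant V r i j) (hjk : SwapInvariant V r j k) :
    SwapInvariant V r i k := by
  by_cases eij : i = j
  · subst eij; exact hjk
  by_cases ejk : j = k
  · subst ejk; exact hij
  by_cases eik : i = k
  · subst eik; exact SwapInvariant.refl V r i
  intro f hf u v hu hv
  obtain ⟨w, hw⟩ := hsurj f hf j
  have huw : u ≠ w := by rintro rfl; exact eij (hu.symm.trans hw)
  have hvw : v ≠ w := by rintro rfl; exact ejk (hw.symm.trans hv)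
  have huv : u ≠ v := by rintro rfl; exact eik (hu.symm.trans hv)
  have s1 := hij f hf u w hu hw
  have s2 := hjk (f ∘ Equiv.swap u w) (hV _ _ hf) u v (by simp [hw])
    (by simp [Equiv.swap_apply_of_ne_of_ne huv.symm hvw, hv])
  have s3 := hij ((f ∘ Equiv.swap u w) ∘ Equiv.swap u v) (hV _ _ (hV _ _ hf)) w v
    (by simp [Equiv.swap_apply_of_ne_of_ne huw.symm hvw.symm, hu]) (by simp [hw])
  have key : ((f ∘ Equiv.swap u w) ∘ Equiv.swap u v) ∘ Equiv.swap w v = f ∘ Equiv.swap u v := by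
    funext x
    simp only [Function.comp, Equiv.swap_apply_def]
    congr 1
    split_ifs <;> simp_all
  rw [← key, s3, s2, s1]

lemma invariant_perm {α β : Type*} [DecidableEq α] [Finite α] {V : (α → β) → Prop}
    {r : (α → β) → ℝ} (hV : ∀ f (σ : Equiv.Perm α), V f → V (f ∘ σ))
    (hall : ∀ i j, SwapInvariant V r i j) (σ : Equiv.Perm α) :
    ∀ f, V f → r (f ∘ σ) = r f := by
  induction σ using Equiv.Perm.swap_induction_on with
  | one => intro f _; rfl
  | swap_mul σ x y _ ih =>
    intro f hf
    have e : f ∘ (Equiv.swap x y * σ : Equiv.Perm α) = (f ∘ Equiv.swap x y) ∘ σ := rfl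
    rw [e, ih _ (hV _ _ hf), hall _ _ f hf x y rfl rfl]

/-- The pairs of lists in the flat exchange conditions connect every list to list `0`. -/
lemma connected_to_zero {h hN : ℕ} (hN1 : 1 ≤ hN) (hNh : hN < h)
    {R : Fin (h+1) → Fin (h+1) → Prop} (hrefl : R 0 0)
    (htrans : ∀ i j k, R i j → R j k → R i k)
    (hstep : ∀ i : Fin (h+1), 1 ≤ i.val → i.val < h → i.val ≠ hN → R i (i + 1))
    (h1 : R 0 ⟨1, by omega⟩) (h2 : R 0 ⟨hN + 1, by omega⟩) (l : ℕ) (hl : l < h + 1) :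
    R 0 ⟨l, hl⟩ := by
  induction l with
  | zero => exact hrefl
  | succ l ih =>
    by_cases e0 : l = 0
    · subst e0; exact h1
    by_cases e1 : l = hN
    · subst e1; exact h2
    have hs := hstep ⟨l, by omega⟩ (by simp only; omega) (by simp only; omega) e1
    have e : (⟨l, by omega⟩ : Fin (h+1)) + 1 = ⟨l + 1, hl⟩ := by
      apply Fin.ext
      rw [Fin.val_add_one_of_lt' (by simp only; omega)]
    rw [e] at hs
    exact htrans _ _ _ (ih (by omega)) hs

/-! ### Characterization of the product form -/

/-- a positive probability distribution on `C_n(m)` satisfies the flat exchange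
conditions (*F) if and only if it is the flat product-form distribution. -/
theorem flat_exchange_iff_product_form
    (n h hN : ℕ) (hn : 2 ≤ n) (hh : 2 ≤ h) (hN1 : 1 ≤ hN) (hNh : hN < h)
    (p : Fin n → ℝ) (hp : ∀ k, 0 < p k) (hpsum : ∑ k, p k = 1)
    (m : Fin (h+1) → ℕ) (hm : ∀ i, i ≠ 0 → 0 < m i)
    (hmn : ∑ i ∈ Finset.univ.filter (fun i : Fin (h+1) => i ≠ 0), m i < n)
    (π : (Fin (h+1) → Finset (Fin n)) → ℝ)
    (hπpos : ∀ c ∈ cacheConfigs n h m, 0 < π c)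
    (hπsum : ∑ c ∈ cacheConfigs n h m, π c = 1) :
    (∀ c ∈ cacheConfigs n h m,
      (∀ i : Fin (h+1), 1 ≤ i.val → i.val < h → i.val ≠ hN →
        ∀ u ∈ c i, ∀ v ∈ c (i + 1),
          π (swapPages n h c i (i + 1) u v) * p v = π c * p u) ∧
      (∀ k ∈ c 0, ∀ u ∈ c ⟨1, by omega⟩,
        π (swapPages n h c 0 ⟨1, by omega⟩ k u) * p u = π c * p k) ∧
      (∀ k ∈ c 0, ∀ u ∈ c ⟨hN + 1, by omega⟩,
        π (swapPages n h c 0 ⟨hN + 1, by omega⟩ k u) * p u = π c * p k))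
    ↔ (∀ c ∈ cacheConfigs n h m,
        π c = configWeight n h p (htFlat h hN) c
            / ∑ c' ∈ cacheConfigs n h m, configWeight n h p (htFlat h hN) c') := by
  have hval : ∀ i : Fin (h+1), i.val < h → (i + 1).val = i.val + 1 := fun i hi =>
    Fin.val_add_one_of_lt' (by omega)
  have hne : ∀ i : Fin (h+1), i.val < h → i ≠ i + 1 := by
    intro i hi e
    have := hval i hi
    rw [← e] at this
    omega
  have hht : ∀ i : Fin (h+1), i.val < h → i.val ≠ hN →
      htFlat h hN (i + 1) = htFlat h hN i + 1 := by
    intro i hi hiN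
    simp only [htFlat, hval i hi]
    split_ifs <;> omega
  have hht1 : htFlat h hN ⟨1, by omega⟩ = htFlat h hN 0 + 1 := by
    simp [htFlat, hN1]
  have hht2 : htFlat h hN ⟨hN + 1, by omega⟩ = htFlat h hN 0 + 1 := by
    simp [htFlat]
  have hne1 : (0 : Fin (h+1)) ≠ ⟨1, by omega⟩ := by
    intro e
    simpa using congrArg Fin.val e
  have hne2 : (0 : Fin (h+1)) ≠ ⟨hN + 1, by omega⟩ := by
    intro e
    simpa using congrArg Fin.val e
  set W := configWeight n h p (htFlat h hN) with hW
  constructor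
  · intro H
    set V : (Fin n → Fin (h+1)) → Prop := fun f => labelConfig f ∈ cacheConfigs n h m with hVdef
    set r : (Fin n → Fin (h+1)) → ℝ := fun f => π (labelConfig f) / W (labelConfig f) with hr
    have hV : ∀ f (σ : Equiv.Perm (Fin n)), V f → V (f ∘ σ) := fun f σ hf => comp_mem σ hf
    have hsurj : ∀ f, V f → ∀ j, ∃ w, f w = j := fun f hf j => label_surjective hm hmn hf j
    have hWpos : ∀ f : Fin n → Fin (h+1), 0 < W (labelConfig f) := fun f =>
      configWeight_labelConfig_pos hp _ f
    -- An exchange condition between lists one level apart says that `π / W` is unchanged.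
    have hinv : ∀ i j : Fin (h+1), i ≠ j → htFlat h hN j = htFlat h hN i + 1 →
        (∀ c ∈ cacheConfigs n h m, ∀ u ∈ c i, ∀ v ∈ c j,
          π (swapPages n h c i j u v) * p v = π c * p u) → SwapInvariant V r i j := by
      intro i j hij hhij hex f hf u v hu hv
      subst hu hv
      have e1 := hex _ hf u ((mem_labelConfig f _ _).2 rfl) v ((mem_labelConfig f _ _).2 rfl)
      rw [swapPages_labelConfig f hij] at e1
      have e2 := labelWeight_swap_of_ht (p := p) (htFlat h hN) f hhij
      rw [← hW] at e2
      simp only [hr]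
      rw [div_eq_div_iff (hWpos _).ne' (hWpos _).ne']
      have hpuv : p u * p v ≠ 0 := (mul_pos (hp u) (hp v)).ne'
      apply mul_right_cancel₀ hpuv
      linear_combination (W (labelConfig f) * p u) * e1 - (π (labelConfig f) * p u) * e2
    have hzero : ∀ l : Fin (h+1), SwapInvariant V r 0 l := by
      intro l
      refine connected_to_zero hN1 hNh (R := SwapInvariant V r) (SwapInvariant.refl V r 0)
        (fun i j k => SwapInvariant.trans hV hsurj) ?_ ?_ ?_ l.val l.isLt
      · intro i hi1 hi hiN
        exact hinv i (i + 1) (hne i hi) (hht i hi hiN) fun c hc => (H c hc).1 i hi1 hi hiN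
      · exact hinv _ _ hne1 hht1 fun c hc => (H c hc).2.1
      · exact hinv _ _ hne2 hht2 fun c hc => (H c hc).2.2
    have hall : ∀ i j, SwapInvariant V r i j := fun i j =>
      SwapInvariant.trans hV hsurj (hzero i).symm (hzero j)
    intro c hc
    obtain ⟨f, rfl⟩ := exists_label hc
    have hprop : ∀ c' ∈ cacheConfigs n h m, π c' = r f * W c' := by
      intro c' hc'
      obtain ⟨g, rfl⟩ := exists_label hc'
      obtain ⟨σ, rfl⟩ := exists_perm hc hc'
      have e := invariant_perm hV hall σ f hc
      rw [← e]
      exact (div_mul_cancel₀ _ (hWpos _).ne').symm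
    rw [Finset.sum_congr rfl hprop, ← Finset.mul_sum] at hπsum
    rw [hprop _ hc, eq_div_iff (right_ne_zero_of_mul_eq_one hπsum)]
    linear_combination W (labelConfig f) * hπsum
  · intro H
    have hex : ∀ i j : Fin (h+1), i ≠ j → htFlat h hN j = htFlat h hN i + 1 →
        ∀ c ∈ cacheConfigs n h m, ∀ u ∈ c i, ∀ v ∈ c j,
          π (swapPages n h c i j u v) * p v = π c * p u := by
      intro i j hij hhij c hc u hu v hv
      obtain ⟨f, rfl⟩ := exists_label hc
      rw [mem_labelConfig] at hu hv
      subst hu hv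
      have e2 := labelWeight_swap_of_ht (p := p) (htFlat h hN) f hhij
      rw [← hW] at e2
      rw [swapPages_labelConfig f hij, H _ hc, H _ (comp_mem _ hc), div_mul_eq_mul_div, e2,
        div_mul_eq_mul_div]
    intro c hc
    exact ⟨fun i _ hi hiN => hex i (i + 1) (hne i hi) (hht i hi hiN) c hc,
      hex _ _ hne1 hht1 c hc, hex _ _ hne2 hht2 c hc⟩
end

section
/- Let π: C_n(m) → (0,∞) be a probability distribution (Σ_{c∈C_n(m)} π(c) = 1). Then π satisfies the layered exchange conditions (*L) if and only if π(c) = Z_L^{-1} ∏_{i=1}^h (∏_{j∈c_i} p_j)^{i} for every c ∈ C_n(m), where Z_L = Σ_{c'∈C_n(m)} ∏_{i=1}^h (∏_{j∈c'_i} p_j)^{i}. -/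
/-!
Write `w` for the layered weight. Exchanging `u` (list `i`) with `v` (list `i + 1`) multiplies `w`
by `p u / p v` (`weight_swapPages`), so the exchange conditions say exactly that the ratio `π / w`
does not change under exchanges between adjacent lists. The product form clearly has this property.

Conversely, let permutations of the pages act on configurations (`permConfig`). An exchange between
lists `i < j` with `j > i + 1` is a product of three shorter exchanges through a page of list `i + 1`,
which is nonempty because `m (i + 1) > 0`; hence the ratio is invariant under every transposition
of pages (`ratio_swap`), and so under every permutation (`ratio_perm`). The action is transitive on
`C_n(m)`, since two configurations have equally large lists (`exists_perm`). So `π / w` is constant,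
and `∑ π = 1` forces the constant to be `1 / Z`.
-/


open Finset

/-- Layered height function: `ht_L(i) = i`. -/
def htLayer (h : ℕ) : Fin (h+1) → ℕ := fun i => i.val

/-! ### Permutations of pages acting on configurations -/

theorem mem_cacheConfigs {n h : ℕ} {m : Fin (h+1) → ℕ} {c : Fin (h+1) → Finset (Fin n)} :
    c ∈ cacheConfigs n h m ↔ IsCacheConfig n h m c := by
  simp [cacheConfigs]

/-- The action of a permutation `σ` of the pages on families of lists: every page `x` is renamed
to `σ x`. -/
def permConfig {n h : ℕ} (σ : Equiv.Perm (Fin n)) (c : Fin (h+1) → Finset (Fin n)) :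
    Fin (h+1) → Finset (Fin n) :=
  fun l => (c l).map σ.toEmbedding

theorem mem_permConfig {n h : ℕ} {σ : Equiv.Perm (Fin n)} {c : Fin (h+1) → Finset (Fin n)}
    {l : Fin (h+1)} {x : Fin n} : x ∈ permConfig σ c l ↔ σ.symm x ∈ c l := by
  simp only [permConfig, Finset.mem_map_equiv]

theorem permConfig_mul {n h : ℕ} (σ τ : Equiv.Perm (Fin n)) (c : Fin (h+1) → Finset (Fin n)) :
    permConfig (σ * τ) c = permConfig σ (permConfig τ c) := by
  funext l
  ext x
  simp only [mem_permConfig]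
  rfl

theorem IsCacheConfig.exists_mem {n h : ℕ} {m : Fin (h+1) → ℕ} {c : Fin (h+1) → Finset (Fin n)}
    (hc : IsCacheConfig n h m c) (x : Fin n) : ∃ l, x ∈ c l := by
  have hx : x ∈ Finset.univ.biUnion c := by
    rw [hc.2.2]
    exact Finset.mem_univ x
  simpa using hx

theorem IsCacheConfig.eq_of_mem {n h : ℕ} {m : Fin (h+1) → ℕ} {c : Fin (h+1) → Finset (Fin n)}
    (hc : IsCacheConfig n h m c) {x : Fin n} {i j : Fin (h+1)} (hi : x ∈ c i) (hj : x ∈ c j) :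
    i = j := by
  by_contra hij
  exact Finset.disjoint_left.mp (hc.2.1 i j hij) hi hj

theorem IsCacheConfig.perm {n h : ℕ} {m : Fin (h+1) → ℕ} {c : Fin (h+1) → Finset (Fin n)}
    (hc : IsCacheConfig n h m c) (σ : Equiv.Perm (Fin n)) :
    IsCacheConfig n h m (permConfig σ c) := by
  refine ⟨fun i hi => ?_, fun i j hij => ?_, ?_⟩
  · simpa [permConfig] using hc.1 i hi
  · rw [Finset.disjoint_left]
    intro x hx hy
    exact hij (hc.eq_of_mem (mem_permConfig.mp hx) (mem_permConfig.mp hy))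
  · ext x
    simpa [mem_permConfig] using hc.exists_mem (σ.symm x)

theorem swapPages_eq_perm {n h : ℕ} {m : Fin (h+1) → ℕ} {c : Fin (h+1) → Finset (Fin n)}
    (hc : IsCacheConfig n h m c) {i j : Fin (h+1)} (hij : i ≠ j) {u v : Fin n}
    (hu : u ∈ c i) (hv : v ∈ c j) :
    swapPages n h c i j u v = permConfig (Equiv.swap u v) c := by
  have hU : ∀ l, u ∈ c l ↔ l = i := fun l =>
    ⟨fun hl => hc.eq_of_mem hl hu, fun hl => hl ▸ hu⟩
  have hV : ∀ l, v ∈ c l ↔ l = j := fun l =>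
    ⟨fun hl => hc.eq_of_mem hl hv, fun hl => hl ▸ hv⟩
  funext l
  ext x
  rw [mem_permConfig, Equiv.symm_swap, Equiv.swap_apply_def]
  unfold swapPages
  grind

/-- Since the lists cover all pages and the sizes of the lists other than list `0` are prescribed,
all lists (list `0` included) have the same size in any two configurations. -/
theorem card_eq {n h : ℕ} {m : Fin (h+1) → ℕ} {c d : Fin (h+1) → Finset (Fin n)}
    (hc : IsCacheConfig n h m c) (hd : IsCacheConfig n h m d) (l : Fin (h+1)) :
    (c l).card = (d l).card := by
  have total : ∀ e : Fin (h+1) → Finset (Fin n), IsCacheConfig n h m e →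
      (e 0).card + ∑ i : Fin h, m i.succ = n := by
    intro e he
    have h1 : (Finset.univ.biUnion e).card = ∑ i, (e i).card :=
      Finset.card_biUnion fun i _ j _ hij => he.2.1 i j hij
    rw [he.2.2, Finset.card_univ, Fintype.card_fin, Fin.sum_univ_succ] at h1
    have h2 : ∑ i : Fin h, (e i.succ).card = ∑ i : Fin h, m i.succ :=
      Finset.sum_congr rfl fun i _ => he.1 _ (Fin.succ_ne_zero i)
    omega
  by_cases hl : l = 0
  · subst hl
    have := total c hc
    have := total d hd
    omega
  · rw [hc.1 l hl, hd.1 l hl]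

/-- The permutations of the pages act transitively on configurations. -/
theorem exists_perm_s5 {n h : ℕ} {m : Fin (h+1) → ℕ} {c d : Fin (h+1) → Finset (Fin n)}
    (hc : IsCacheConfig n h m c) (hd : IsCacheConfig n h m d) :
    ∃ σ : Equiv.Perm (Fin n), permConfig σ c = d := by
  choose f hf using hc.exists_mem
  choose g hg using hd.exists_mem
  have hfc : ∀ x l, f x = l ↔ x ∈ c l := fun x l =>
    ⟨fun e => e ▸ hf x, fun e => hc.eq_of_mem (hf x) e⟩
  have hgd : ∀ x l, g x = l ↔ x ∈ d l := fun x l =>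
    ⟨fun e => e ▸ hg x, fun e => hd.eq_of_mem (hg x) e⟩
  have he : ∀ l, Nonempty ({x // f x = l} ≃ {x // g x = l}) := by
    intro l
    refine ⟨(Equiv.subtypeEquivRight fun x => hfc x l).trans
      ((Finset.equivOfCardEq (card_eq hc hd l)).trans
        (Equiv.subtypeEquivRight fun x => hgd x l).symm)⟩
  let e := fun l => (he l).some
  let σ : Equiv.Perm (Fin n) :=
    (Equiv.sigmaFiberEquiv f).symm.trans
      ((Equiv.sigmaCongrRight e).trans (Equiv.sigmaFiberEquiv g))
  have hσ : ∀ x, g (σ x) = f x := fun x => (e (f x) ⟨x, rfl⟩).2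
  refine ⟨σ, ?_⟩
  funext l
  ext x
  rw [mem_permConfig, ← hfc, ← hgd, ← hσ, Equiv.apply_symm_apply]

/-! ### The layered weight under exchanges -/

theorem configWeight_pos {n h : ℕ} {p : Fin n → ℝ} (hp : ∀ k, 0 < p k) (ht : Fin (h+1) → ℕ)
    (c : Fin (h+1) → Finset (Fin n)) : 0 < configWeight n h p ht c :=
  Finset.prod_pos fun _ _ => pow_pos (Finset.prod_pos fun k _ => hp k) _

theorem configWeight_split {n h : ℕ} (p : Fin n → ℝ) (ht : Fin (h+1) → ℕ)
    (c : Fin (h+1) → Finset (Fin n)) {i j : Fin (h+1)} (hij : i ≠ j) :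
    configWeight n h p ht c = (∏ k ∈ c i, p k) ^ ht i * ((∏ k ∈ c j, p k) ^ ht j *
      ∏ l ∈ (Finset.univ.erase i).erase j, (∏ k ∈ c l, p k) ^ ht l) := by
  unfold configWeight
  rw [← Finset.mul_prod_erase _ _ (Finset.mem_univ i),
    ← Finset.mul_prod_erase (Finset.univ.erase i) _
      (Finset.mem_erase.mpr ⟨hij.symm, Finset.mem_univ j⟩)]

/-- The layered weight itself satisfies the exchange conditions. -/
theorem weight_swapPages {n h : ℕ} {m : Fin (h+1) → ℕ} {c : Fin (h+1) → Finset (Fin n)}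
    (p : Fin n → ℝ) (hc : IsCacheConfig n h m c) {i j : Fin (h+1)} (hij : j.val = i.val + 1)
    {u v : Fin n} (hu : u ∈ c i) (hv : v ∈ c j) :
    configWeight n h p (htLayer h) (swapPages n h c i j u v) * p v
      = configWeight n h p (htLayer h) c * p u := by
  have hne : i ≠ j := by
    rintro rfl
    omega
  have hvi : v ∉ (c i).erase u := fun hx =>
    hne (hc.eq_of_mem (Finset.mem_of_mem_erase hx) hv)
  have huj : u ∉ (c j).erase v := fun hx =>
    hne (hc.eq_of_mem hu (Finset.mem_of_mem_erase hx))
  rw [configWeight_split p _ _ hne, configWeight_split p _ c hne]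
  have hrest : ∏ l ∈ (Finset.univ.erase i).erase j,
        (∏ k ∈ swapPages n h c i j u v l, p k) ^ htLayer h l
      = ∏ l ∈ (Finset.univ.erase i).erase j, (∏ k ∈ c l, p k) ^ htLayer h l := by
    refine Finset.prod_congr rfl fun l hl => ?_
    simp only [Finset.mem_erase] at hl
    simp [swapPages, hl.1, hl.2.1]
  have hsi : swapPages n h c i j u v i = insert v ((c i).erase u) := by simp [swapPages]
  have hsj : swapPages n h c i j u v j = insert u ((c j).erase v) := by
    simp [swapPages, hne.symm]
  rw [hrest, hsi, hsj, Finset.prod_insert hvi, Finset.prod_insert huj,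
    ← Finset.mul_prod_erase (c i) p hu, ← Finset.mul_prod_erase (c j) p hv]
  simp only [htLayer, hij, mul_pow, pow_succ]
  ring

/-! ### From adjacent exchanges to all permutations -/

/-- A function on configurations that is invariant under exchanges between adjacent lists is
invariant under exchanges between lists `i` and `i + d + 1`, for every `d`: the exchange is routed
through a page of list `i + 1`. -/
theorem ratio_lists {n h : ℕ} {m : Fin (h+1) → ℕ} (hm : ∀ i, i ≠ 0 → 0 < m i)
    (r : (Fin (h+1) → Finset (Fin n)) → ℝ)
    (hr : ∀ c, IsCacheConfig n h m c → ∀ i j : Fin (h+1), j.val = i.val + 1 →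
      ∀ u ∈ c i, ∀ v ∈ c j, r (permConfig (Equiv.swap u v) c) = r c)
    (d : ℕ) : ∀ c, IsCacheConfig n h m c → ∀ i j : Fin (h+1), j.val = i.val + (d + 1) →
      ∀ u ∈ c i, ∀ v ∈ c j, r (permConfig (Equiv.swap u v) c) = r c := by
  induction d with
  | zero => exact hr
  | succ d ih =>
    intro c hc i j hij u hu v hv
    obtain ⟨k, hk⟩ : ∃ k : Fin (h+1), k.val = i.val + 1 := ⟨⟨i.val + 1, by omega⟩, rfl⟩
    have hk0 : k ≠ 0 := by
      rintro rfl
      simp at hk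
    obtain ⟨w, hw⟩ : (c k).Nonempty := by
      rw [← Finset.card_pos, hc.1 k hk0]
      exact hm k hk0
    have huv : u ≠ v := by
      rintro rfl
      have := hc.eq_of_mem hu hv
      omega
    have huw : u ≠ w := by
      rintro rfl
      have := hc.eq_of_mem hu hw
      omega
    have hvw : v ≠ w := by
      rintro rfl
      have := hc.eq_of_mem hv hw
      omega
    -- Applied from right to left, each factor exchanges pages of lists less than `d + 2` apart.
    have hmul : Equiv.swap u v = Equiv.swap w v * (Equiv.swap u v * Equiv.swap u w) := by
      ext x
      simp only [Equiv.Perm.mul_apply, Equiv.swap_apply_def]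
      grind
    rw [hmul, permConfig_mul, permConfig_mul]
    have hc1 := hc.perm (Equiv.swap u w)
    have hc2 := hc1.perm (Equiv.swap u v)
    have m1 : ∀ x l, x ∈ c l →
        Equiv.swap u w x ∈ permConfig (Equiv.swap u w) c l := by
      intro x l hx
      simpa [mem_permConfig] using hx
    have m2 : ∀ x l, x ∈ permConfig (Equiv.swap u w) c l →
        Equiv.swap u v x ∈ permConfig (Equiv.swap u v) (permConfig (Equiv.swap u w) c) l := by
      intro x l hx
      rwa [mem_permConfig, Equiv.symm_apply_apply]
    have hu1 := m1 u i hu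
    have hw1 := m1 w k hw
    have hv1 := m1 v j hv
    rw [Equiv.swap_apply_left] at hu1
    rw [Equiv.swap_apply_right] at hw1
    rw [Equiv.swap_apply_of_ne_of_ne huv.symm hvw] at hv1
    have hw2 := m2 w i hu1
    have hv2 := m2 u k hw1
    rw [Equiv.swap_apply_of_ne_of_ne huw.symm hvw.symm] at hw2
    rw [Equiv.swap_apply_left] at hv2
    rw [hr _ hc2 i k hk w hw2 v hv2, ih _ hc1 k j (by omega) u hw1 v hv1, hr c hc i k hk u hu w hw]

theorem ratio_swap {n h : ℕ} {m : Fin (h+1) → ℕ} (hm : ∀ i, i ≠ 0 → 0 < m i)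
    (r : (Fin (h+1) → Finset (Fin n)) → ℝ)
    (hr : ∀ c, IsCacheConfig n h m c → ∀ i j : Fin (h+1), j.val = i.val + 1 →
      ∀ u ∈ c i, ∀ v ∈ c j, r (permConfig (Equiv.swap u v) c) = r c)
    (c : Fin (h+1) → Finset (Fin n)) (hc : IsCacheConfig n h m c) (u v : Fin n) :
    r (permConfig (Equiv.swap u v) c) = r c := by
  obtain ⟨i, hu⟩ := hc.exists_mem u
  obtain ⟨j, hv⟩ := hc.exists_mem v
  rcases lt_trichotomy i.val j.val with hlt | heq | hgt
  · exact ratio_lists hm r hr (j.val - i.val - 1) c hc i j (by omega) u hu v hv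
  · -- Two pages of the same list: the configuration does not change.
    have hij : i = j := Fin.ext heq
    subst hij
    congr 1
    funext l
    ext x
    have hU : u ∈ c l ↔ v ∈ c l :=
      ⟨fun hl => hc.eq_of_mem hu hl ▸ hv, fun hl => hc.eq_of_mem hv hl ▸ hu⟩
    rw [mem_permConfig, Equiv.symm_swap, Equiv.swap_apply_def]
    grind
  · rw [Equiv.swap_comm]
    exact ratio_lists hm r hr (i.val - j.val - 1) c hc j i (by omega) v hv u hu

theorem ratio_perm {n h : ℕ} {m : Fin (h+1) → ℕ} (hm : ∀ i, i ≠ 0 → 0 < m i)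
    (r : (Fin (h+1) → Finset (Fin n)) → ℝ)
    (hr : ∀ c, IsCacheConfig n h m c → ∀ i j : Fin (h+1), j.val = i.val + 1 →
      ∀ u ∈ c i, ∀ v ∈ c j, r (permConfig (Equiv.swap u v) c) = r c)
    (c : Fin (h+1) → Finset (Fin n)) (hc : IsCacheConfig n h m c) (σ : Equiv.Perm (Fin n)) :
    r (permConfig σ c) = r c := by
  induction σ using Equiv.Perm.swap_induction_on with
  | one =>
    congr 1
    funext l
    ext x
    rw [mem_permConfig]
    rfl
  | swap_mul f x y _ ih => rw [permConfig_mul, ratio_swap hm r hr _ (hc.perm f), ih]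

/-- a positive probability distribution on `C_n(m)` satisfies the layered
exchange conditions (*L) if and only if it is the layered product-form distribution. -/
theorem layered_exchange_iff_product_form
    (n h : ℕ) (hn : 2 ≤ n) (hh : 2 ≤ h)
    (p : Fin n → ℝ) (hp : ∀ k, 0 < p k) (hpsum : ∑ k, p k = 1)
    (m : Fin (h+1) → ℕ) (hm : ∀ i, i ≠ 0 → 0 < m i)
    (hmn : ∑ i ∈ Finset.univ.filter (fun i : Fin (h+1) => i ≠ 0), m i < n)
    (π : (Fin (h+1) → Finset (Fin n)) → ℝ)
    (hπpos : ∀ c ∈ cacheConfigs n h m, 0 < π c)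
    (hπsum : ∑ c ∈ cacheConfigs n h m, π c = 1) :
    (∀ c ∈ cacheConfigs n h m,
      (∀ i : Fin (h+1), 1 ≤ i.val → i.val < h →
        ∀ u ∈ c i, ∀ v ∈ c (i + 1),
          π (swapPages n h c i (i + 1) u v) * p v = π c * p u) ∧
      (∀ k ∈ c 0, ∀ u ∈ c ⟨1, by omega⟩,
        π (swapPages n h c 0 ⟨1, by omega⟩ k u) * p u = π c * p k))
    ↔ (∀ c ∈ cacheConfigs n h m,
        π c = configWeight n h p (htLayer h) c
            / ∑ c' ∈ cacheConfigs n h m, configWeight n h p (htLayer h) c') := by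
  -- Both exchange conditions at once: `j = i + 1`, with `i = 0` allowed.
  have key : (∀ c ∈ cacheConfigs n h m,
      (∀ i : Fin (h+1), 1 ≤ i.val → i.val < h →
        ∀ u ∈ c i, ∀ v ∈ c (i + 1),
          π (swapPages n h c i (i + 1) u v) * p v = π c * p u) ∧
      (∀ k ∈ c 0, ∀ u ∈ c ⟨1, by omega⟩,
        π (swapPages n h c 0 ⟨1, by omega⟩ k u) * p u = π c * p k))
      ↔ ∀ c, IsCacheConfig n h m c → ∀ i j : Fin (h+1), j.val = i.val + 1 →
        ∀ u ∈ c i, ∀ v ∈ c j, π (swapPages n h c i j u v) * p v = π c * p u := by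
    have hsucc : ∀ i : Fin (h+1), i.val < h → (i + 1).val = i.val + 1 := fun i hi =>
      Fin.val_add_one_of_lt (by rw [Fin.lt_def]; simpa using hi)
    constructor
    · intro H c hc i j hij u hu v hv
      obtain ⟨H1, H2⟩ := H c (mem_cacheConfigs.mpr hc)
      by_cases hi : i.val = 0
      · obtain rfl : i = 0 := Fin.ext hi
        have hj : j = ⟨1, by omega⟩ := Fin.ext (by simpa using hij)
        rw [hj] at hv ⊢
        exact H2 u hu v hv
      · have hih : i.val < h := by omega
        obtain rfl : j = i + 1 := Fin.ext (by rw [hij, hsucc i hih])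
        exact H1 i (by omega) hih u hu v hv
    · intro H c hc
      have hc := mem_cacheConfigs.mp hc
      exact ⟨fun i _ hi u hu v hv => H c hc i (i + 1) (hsucc i hi) u hu v hv,
        fun k hk u hu => H c hc 0 ⟨1, by omega⟩ (by simp) k hk u hu⟩
  rw [key]
  have hw := configWeight_pos hp (htLayer h)
  have swap_perm : ∀ c, IsCacheConfig n h m c → ∀ i j : Fin (h+1), j.val = i.val + 1 →
      ∀ u ∈ c i, ∀ v ∈ c j,
        swapPages n h c i j u v = permConfig (Equiv.swap u v) c := by
    intro c hc i j hij u hu v hv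
    refine swapPages_eq_perm hc ?_ hu hv
    rintro rfl
    omega
  constructor
  · intro H
    have hr : ∀ c, IsCacheConfig n h m c → ∀ i j : Fin (h+1), j.val = i.val + 1 →
        ∀ u ∈ c i, ∀ v ∈ c j,
        (fun e => π e / configWeight n h p (htLayer h) e) (permConfig (Equiv.swap u v) c)
          = (fun e => π e / configWeight n h p (htLayer h) e) c := by
      intro c hc i j hij u hu v hv
      have e1 := H c hc i j hij u hu v hv
      have e2 := weight_swapPages p hc hij hu hv
      rw [swap_perm c hc i j hij u hu v hv] at e1 e2
      change π _ / _ = π _ / _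
      rw [div_eq_div_iff (hw _).ne' (hw _).ne']
      apply mul_right_cancel₀ (mul_pos (hp u) (hp v)).ne'
      linear_combination (configWeight n h p (htLayer h) c * p u) * e1 - (π c * p u) * e2
    intro c hc
    have hconst : ∀ d ∈ cacheConfigs n h m,
        configWeight n h p (htLayer h) d * π c = configWeight n h p (htLayer h) c * π d := by
      intro d hd
      obtain ⟨σ, rfl⟩ := exists_perm_s5 (mem_cacheConfigs.mp hc) (mem_cacheConfigs.mp hd)
      have := ratio_perm hm (fun e => π e / configWeight n h p (htLayer h) e) hr c (mem_cacheConfigs.mp hc) σ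
      change π _ / _ = π _ / _ at this
      rw [div_eq_div_iff (hw _).ne' (hw _).ne'] at this
      linarith
    have hZ : 0 < ∑ c' ∈ cacheConfigs n h m, configWeight n h p (htLayer h) c' :=
      Finset.sum_pos (fun d _ => hw d) ⟨c, hc⟩
    rw [eq_div_iff hZ.ne', mul_comm, Finset.sum_mul, Finset.sum_congr rfl hconst,
      ← Finset.mul_sum, hπsum, mul_one]
  · intro H c hc i j hij u hu v hv
    have e2 := weight_swapPages p hc hij hu hv
    have hs : IsCacheConfig n h m (swapPages n h c i j u v) := by
      rw [swap_perm c hc i j hij u hu v hv]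
      exact hc.perm _
    rw [H _ (mem_cacheConfigs.mpr hs), H c (mem_cacheConfigs.mpr hc), div_mul_eq_mul_div,
      div_mul_eq_mul_div, e2]
end

section
/- Assume h_N ≥ 2, h − h_N ≥ 2 and m_1+…+m_h < n, and let ht = ht_F be the flat height function. Let s ∈ (0,∞)^h satisfy D_i(s) = m_i for all i. Define x_{k,0} = 1/(1 + Σ_{j=1}^h p_k^{ht(j)} s_j), x_{k,i} = p_k^{ht(i)} s_i x_{k,0} for 1 ≤ i ≤ h, and H_i = Σ_{k=1}^n p_k x_{k,i} for 0 ≤ i ≤ h. Then for every α ∈ [0,1] and every page k, all flat-architecture ODE right-hand sides vanish at x: (i) for i ∉ {0, 1, h_N, h_N+1, h}: p_k x_{k,i−1} − H_{i−1} x_{k,i}/m_i + H_i x_{k,i+1}/m_{i+1} − p_k x_{k,i} = 0; (ii) for i = h_N and i = h: p_k x_{k,i−1} − H_{i−1} x_{k,i}/m_i = 0; (iii) for i = 1: (1−α) p_k x_{k,0} − (1−α) H_0 x_{k,1}/m_1 + H_1 x_{k,2}/m_2 − p_k x_{k,1} = 0; (iv) for i = h_N+1: α p_k x_{k,0} − α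 H_0 x_{k,h_N+1}/m_{h_N+1} + H_{h_N+1} x_{k,h_N+2}/m_{h_N+2} − p_k x_{k,h_N+1} = 0; (v) for i = 0: (1−α) H_0 x_{k,1}/m_1 + α H_0 x_{k,h_N+1}/m_{h_N+1} − p_k x_{k,0} = 0. In particular the fixed point of the flat mean-field ODEs is independent of α. -/
/-!
The point `x` satisfies detailed balance along every edge `a → b` of the flat architecture
(an edge raises the height by one): writing `x_{k,a} = p_k^{ht a} c x_{k,0}` with `c = s_a`
(`c = 1` for `a = 0`), the capacity equation `∑_k x_{k,b} = m_b` gives `H_a s_b = c m_b`,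
so the flow `H_a x_{k,b} / m_b` out of `b` equals the flow `p_k x_{k,a}` into it
(`detailed_balance`). Each right-hand side is a linear combination of such edge differences,
and `α` enters only as a weight on them, so all of them vanish for every `α`.
-/

open Finset

/-- Balance along one edge `a → b`, where `y`, `z` are the `a`- and `b`-columns of the state,
`w` is the column of index `0`, `r` is the height of `a` and `M` is the capacity of `b`. -/
lemma detailed_balance {n : ℕ} (p y z w : Fin n → ℝ) (r : ℕ) (c d M : ℝ) (hM : M ≠ 0)
    (hy : ∀ k, y k = p k ^ r * c * w k) (hz : ∀ k, z k = p k ^ (r + 1) * d * w k)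
    (hsum : ∑ k, z k = M) (k : Fin n) :
    (∑ l, p l * y l) * z k / M = p k * y k := by
  have key : (∑ l, p l * y l) * d = c * M := by
    rw [← hsum, Finset.sum_mul, Finset.mul_sum]
    refine Finset.sum_congr rfl fun l _ => ?_
    rw [hy, hz]; ring
  rw [div_eq_iff hM, hz, hy]
  linear_combination (p k ^ (r + 1) * w k) * key

/-- with `ht = ht_F` the flat height function, if `s ∈ (0,∞)^h` satisfies
`D_i(s) = m_i` for all `i = 1,…,h`, then the point `x` given by
`x_{k,0} = 1/(1 + Σ_{j=1}^h p_k^{ht(j)} s_j)`, `x_{k,i} = p_k^{ht(i)} s_i x_{k,0}`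
makes all flat-architecture mean-field ODE right-hand sides vanish, for every
`α ∈ [0,1]`; in particular the fixed point is independent of `α`. -/
theorem flat_fixed_point_of_ODEs
    (n h hN : ℕ) (hn : 2 ≤ n) (hN2 : 2 ≤ hN) (hNh : hN + 2 ≤ h)
    (p : Fin n → ℝ) (hp : ∀ k, 0 < p k)
    (m : ℕ → ℝ) (hm : ∀ i, 1 ≤ i → i ≤ h → 0 < m i)
    (hmn : ∑ i ∈ Finset.Icc 1 h, m i < (n : ℝ))
    (ht : ℕ → ℕ) (hht : ∀ i, ht i = if i ≤ hN then i else i - hN)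
    (s : ℕ → ℝ) (hs : ∀ i, 1 ≤ i → i ≤ h → 0 < s i)
    (hsD : ∀ i, 1 ≤ i → i ≤ h →
      (∑ k, p k ^ ht i * s i / (1 + ∑ j ∈ Finset.Icc 1 h, p k ^ ht j * s j)) = m i)
    (x : Fin n → ℕ → ℝ)
    (hx0 : ∀ k, x k 0 = 1 / (1 + ∑ j ∈ Finset.Icc 1 h, p k ^ ht j * s j))
    (hxi : ∀ k, ∀ i, 1 ≤ i → i ≤ h → x k i = p k ^ ht i * s i * x k 0)
    (H : ℕ → ℝ) (hH : ∀ i, H i = ∑ k, p k * x k i)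
    (α : ℝ) (hα0 : 0 ≤ α) (hα1 : α ≤ 1) :
    (∀ (k : Fin n) (i : ℕ), 1 < i → i < h → i ≠ hN → i ≠ hN + 1 →
      p k * x k (i - 1) - H (i - 1) * x k i / m i
        + H i * x k (i + 1) / m (i + 1) - p k * x k i = 0) ∧
    (∀ (k : Fin n) (i : ℕ), (i = hN ∨ i = h) →
      p k * x k (i - 1) - H (i - 1) * x k i / m i = 0) ∧
    (∀ k : Fin n,
      (1 - α) * (p k * x k 0) - (1 - α) * (H 0 * x k 1 / m 1)
        + H 1 * x k 2 / m 2 - p k * x k 1 = 0) ∧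
    (∀ k : Fin n,
      α * (p k * x k 0) - α * (H 0 * x k (hN + 1) / m (hN + 1))
        + H (hN + 1) * x k (hN + 2) / m (hN + 2) - p k * x k (hN + 1) = 0) ∧
    (∀ k : Fin n,
      (1 - α) * (H 0 * x k 1 / m 1) + α * (H 0 * x k (hN + 1) / m (hN + 1))
        - p k * x k 0 = 0) := by
  have hsum : ∀ i, 1 ≤ i → i ≤ h → ∑ k, x k i = m i := by
    intro i h1 h2
    rw [← hsD i h1 h2]
    refine Finset.sum_congr rfl fun k _ => ?_
    rw [hxi k i h1 h2, hx0]; ring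
  have inner : ∀ (k : Fin n) (a b : ℕ), 1 ≤ a → a ≤ h → 1 ≤ b → b ≤ h → ht b = ht a + 1 →
      H a * x k b / m b = p k * x k a := by
    intro k a b a1 ah b1 bh hab
    rw [hH]
    exact detailed_balance p (x · a) (x · b) (x · 0) (ht a) (s a) (s b) (m b) (hm b b1 bh).ne'
      (fun l => hxi l a a1 ah) (fun l => hab ▸ hxi l b b1 bh) (hsum b b1 bh) k
  have root : ∀ (k : Fin n) (b : ℕ), 1 ≤ b → b ≤ h → ht b = 1 →
      H 0 * x k b / m b = p k * x k 0 := by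
    intro k b b1 bh hb
    rw [hH]
    exact detailed_balance p (x · 0) (x · b) (x · 0) 0 1 (s b) (m b) (hm b b1 bh).ne'
      (fun l => by simp) (fun l => by simpa [hb] using hxi l b b1 bh) (hsum b b1 bh) k
  -- The pair `(hN, hN + 1)` is not an edge: the second list starts again at height one.
  have step : ∀ a, a ≠ hN → ht (a + 1) = ht a + 1 := by
    intro a ha
    rw [hht, hht]
    split_ifs <;> omega
  have ht1 : ht 1 = 1 := by rw [hht, if_pos (by omega)]
  have htN1 : ht (hN + 1) = 1 := by rw [hht, if_neg (by omega)]; omega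
  have prev : ∀ (k : Fin n) (i : ℕ), 1 < i → i ≤ h → i ≠ hN + 1 →
      H (i - 1) * x k i / m i = p k * x k (i - 1) := by
    intro k i h1 h2 h3
    have := step (i - 1) (by omega)
    rw [Nat.sub_add_cancel h1.le] at this
    exact inner k (i - 1) i (by omega) (by omega) (by omega) h2 this
  have next : ∀ (k : Fin n) (i : ℕ), 1 ≤ i → i < h → i ≠ hN →
      H i * x k (i + 1) / m (i + 1) = p k * x k i := fun k i h1 h2 h3 =>
    inner k i (i + 1) h1 h2.le (by omega) h2 (step i h3)
  refine ⟨fun k i h1 h2 h3 h4 => ?_, fun k i hi => ?_, fun k => ?_, fun k => ?_, fun k => ?_⟩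
  · rw [prev k i h1 h2.le h4, next k i h1.le h2 h3]; ring
  · rw [prev k i (by omega) (by omega) (by omega)]; ring
  · rw [root k 1 le_rfl (by omega) ht1, next k 1 le_rfl (by omega) (by omega)]; ring
  · rw [root k (hN + 1) (by omega) (by omega) htN1,
      next k (hN + 1) (by omega) (by omega) (by omega)]; ring
  · rw [root k 1 le_rfl (by omega) ht1, root k (hN + 1) (by omega) (by omega) htN1]; ring
end

section
/- Assume m_1+…+m_h < n, and let ht = ht_L be the layered height function (ht(i) = i). Let s ∈ (0,∞)^h satisfy D_i(s) = m_i for all i. Define x_{k,0} = 1/(1 + Σ_{j=1}^h p_k^{j} s_j), x_{k,i} = p_k^{i} s_i x_{k,0} for 1 ≤ i ≤ h, and H_i = Σ_{k=1}^n p_k x_{k,i} for 0 ≤ i ≤ h. Then for every page k, all layered-architecture ODE right-hand sides vanish at x: for 1 ≤ i ≤ h−1: p_k x_{k,i−1} − H_{i−1} x_{k,i}/m_i + H_i x_{k,i+1}/m_{i+1} − p_k x_{k,i} = 0; for i = h: p_k x_{k,h−1} − H_{h−1} x_{k,h}/m_h = 0; and for i = 0: H_0 x_{k,1}/m_1 −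 p_k x_{k,0} = 0. -/
/-!
With the convention `σ 0 = 1` and `σ i = s i` for `i ≥ 1`, one has
`x k i = p k ^ i * σ i * x k 0`, hence `p k * x k i * σ (i + 1) = σ i * x k (i + 1)`: promoting a
page by one layer multiplies by `p k` and the page-independent ratio `σ (i + 1) / σ i`. The
equations `D_i(s) = m_i` say `∑ k, x k i = m i`, so summing over pages gives
`H i * σ (i + 1) = σ i * m (i + 1)`. Eliminating `σ` yields detailed balance between adjacent layers,
`H i * x k (i + 1) / m (i + 1) = p k * x k i` for `0 ≤ i < h`,
and every right-hand side is a sum of differences of such balanced pairs.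
-/

open Finset

/-- with the layered height function `ht(i) = i`, if `s ∈ (0,∞)^h` satisfies
`D_i(s) = m_i` for all `i = 1,…,h`, then the point `x` given by
`x_{k,0} = 1/(1 + Σ_{j=1}^h p_k^j s_j)`, `x_{k,i} = p_k^i s_i x_{k,0}` makes all
layered-architecture mean-field ODE right-hand sides vanish. -/
theorem layered_fixed_point_of_ODEs
    (n h : ℕ) (hn : 2 ≤ n) (hh : 2 ≤ h)
    (p : Fin n → ℝ) (hp : ∀ k, 0 < p k)
    (m : ℕ → ℝ) (hm : ∀ i, 1 ≤ i → i ≤ h → 0 < m i)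
    (hmn : ∑ i ∈ Finset.Icc 1 h, m i < (n : ℝ))
    (s : ℕ → ℝ) (hs : ∀ i, 1 ≤ i → i ≤ h → 0 < s i)
    (hsD : ∀ i, 1 ≤ i → i ≤ h →
      (∑ k, p k ^ i * s i / (1 + ∑ j ∈ Finset.Icc 1 h, p k ^ j * s j)) = m i)
    (x : Fin n → ℕ → ℝ)
    (hx0 : ∀ k, x k 0 = 1 / (1 + ∑ j ∈ Finset.Icc 1 h, p k ^ j * s j))
    (hxi : ∀ k, ∀ i, 1 ≤ i → i ≤ h → x k i = p k ^ i * s i * x k 0)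
    (H : ℕ → ℝ) (hH : ∀ i, H i = ∑ k, p k * x k i) :
    (∀ (k : Fin n) (i : ℕ), 1 ≤ i → i ≤ h - 1 →
      p k * x k (i - 1) - H (i - 1) * x k i / m i
        + H i * x k (i + 1) / m (i + 1) - p k * x k i = 0) ∧
    (∀ k : Fin n, p k * x k (h - 1) - H (h - 1) * x k h / m h = 0) ∧
    (∀ k : Fin n, H 0 * x k 1 / m 1 - p k * x k 0 = 0) := by
  have hsum : ∀ i, 1 ≤ i → i ≤ h → ∑ k, x k i = m i := by
    intro i h1 h2
    rw [← hsD i h1 h2]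
    refine Finset.sum_congr rfl fun k _ => ?_
    rw [hxi k i h1 h2, hx0 k]
    ring
  -- Only the values `σ i` and `σ (i + 1)` matter; `a` and `b` denote them.
  have hab : ∀ i, i < h → ∃ a b : ℝ, 0 < a ∧ 0 < b ∧
      ∀ k, p k * x k i * b = a * x k (i + 1) := by
    intro i hi
    rcases Nat.eq_zero_or_pos i with rfl | hpos
    · refine ⟨1, s 1, one_pos, hs 1 le_rfl (by omega), fun k => ?_⟩
      rw [hxi k (0 + 1) (by omega) (by omega)]
      ring
    · refine ⟨s i, s (i + 1), hs i hpos hi.le, hs (i + 1) (by omega) hi, fun k => ?_⟩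
      rw [hxi k (i + 1) (by omega) hi, hxi k i hpos hi.le]
      ring
  have key : ∀ i, i < h → ∀ k, H i * x k (i + 1) / m (i + 1) = p k * x k i := by
    intro i hi k
    obtain ⟨a, b, ha, hb, hx⟩ := hab i hi
    have hHi : H i * b = a * m (i + 1) := by
      rw [hH, Finset.sum_mul, ← hsum (i + 1) (by omega) hi, Finset.mul_sum]
      exact Finset.sum_congr rfl fun k _ => hx k
    rw [div_eq_iff (hm (i + 1) (by omega) hi).ne']
    apply mul_left_cancel₀ ha.ne'
    linear_combination (-H i) * hx k + p k * x k i * hHi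
  refine ⟨fun k i h1 h2 => ?_, fun k => ?_, fun k => ?_⟩
  · have e1 := key (i - 1) (by omega) k
    have e2 := key i (by omega) k
    rw [Nat.sub_add_cancel h1] at e1
    rw [e1, e2]
    ring
  · have e := key (h - 1) (by omega) k
    rw [Nat.sub_add_cancel (by omega : 1 ≤ h)] at e
    rw [e, sub_self]
  · exact sub_eq_zero.mpr (key 0 (by omega) k)
end

section
/- Consider the one-step flat-architecture cache dynamics started from configuration c ∈ C_n(m): a page j is requested with probability p_j; if j is in list 0 then with probability α it exchanges with a uniformly random page of list h_N+1 and with probability 1−α with a uniformly random page of list 1; if j lies in list i with i ∉ {h_N, h} it exchanges with a uniformly random page of list i+1; if j lies in list h_N or list h nothing changes. Let X_{k,i}(c) ∈ {0,1} indicate that page k is in list i of c, and H_l(c) = Σ_{j=1}^n p_j X_{j,l}(c). Then for every page k and every list i with i ∉ {0, 1, h_N, h_N+1, h}, the expected one-step change of X_{k,i} equals p_k X_{k,i−1}(c) − H_{i−1}(c) X_{k,i}(c)/m_i + H_i(c) X_{k,i+1}(c)/m_{i+1} − p_k X_{k,i}(c). -/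
/-!
The expected change is computed exchange by exchange. Exchanging `j` in list `a` with `u` in
list `b` changes the indicator of `k ∈ c i` by `([i = a] - [i = b]) * ([k = u] - [k = j])`
(`swapPages_indicator_sub`); averaging over `u` in list `b`, which has `M` pages, turns `[k = u]`
into `[k ∈ c b] / M` (`swapPages_mean_change`). A miss involves lists `0`, `1`, `hN + 1` only, so
it leaves a middle list `i` unchanged. A hit in list `l` involves lists `l` and `l + 1`, so only
`l = i - 1` and `l = i` contribute, and both of these hits do trigger an exchange because
`i ≠ hN`, `i ≠ hN + 1`, `1 < i < h`. Summing the two contributions against `p j` gives the four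
terms of the formula.
-/

open Finset

/-- Exchanging `j` of list `a` with `u` of list `b` changes the membership of `k` in list `a`
by `[k = u] - [k = j]`, and in list `b` by the opposite amount; other lists are untouched. -/
lemma swapPages_indicator_sub {n h : ℕ} {c : Fin (h+1) → Finset (Fin n)} {a b : Fin (h+1)}
    (hab : a ≠ b) (hdisj : Disjoint (c a) (c b)) {j u : Fin n} (hj : j ∈ c a) (hu : u ∈ c b)
    (k : Fin n) (i : Fin (h+1)) :
    ((if k ∈ swapPages n h c a b j u i then 1 else 0 : ℝ) - if k ∈ c i then 1 else 0)
      = ((if i = a then 1 else 0) - if i = b then 1 else 0)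
        * ((if k = u then 1 else 0) - if k = j then 1 else 0) := by
  have hjb : j ∉ c b := Finset.disjoint_left.mp hdisj hj
  have hua : u ∉ c a := Finset.disjoint_right.mp hdisj hu
  have huj : u ≠ j := fun e => hua (e ▸ hj)
  unfold swapPages
  by_cases hia : i = a
  · subst hia
    by_cases hku : k = u
    · subst hku; simp [hab, hua, huj]
    · by_cases hkj : k = j
      · subst hkj; simp [hab, hku, hj]
      · simp [hku, hkj]
  · by_cases hib : i = b
    · subst hib
      by_cases hku : k = u
      · subst hku; simp [hia, hu, huj]
      · by_cases hkj : k = j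
        · subst hkj; simp [hia, hku, hjb]
        · simp [hia, hku, hkj]
    · simp [hia, hib]

/-- Average of `swapPages_indicator_sub` over a uniformly random page `u` of list `b`. -/
lemma swapPages_mean_change {n h : ℕ} {c : Fin (h+1) → Finset (Fin n)} {a b : Fin (h+1)}
    (hab : a ≠ b) (hdisj : Disjoint (c a) (c b)) {M : ℕ} (hM : (c b).card = M) (hM0 : 0 < M)
    {j : Fin n} (hj : j ∈ c a) (k : Fin n) (i : Fin (h+1)) :
    (∑ u ∈ c b, ((if k ∈ swapPages n h c a b j u i then 1 else 0 : ℝ)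
        - if k ∈ c i then 1 else 0)) / (M : ℝ)
      = ((if i = a then 1 else 0) - if i = b then 1 else 0)
        * ((if k ∈ c b then 1 else 0) / (M : ℝ) - if k = j then 1 else 0) := by
  have hM' : (M : ℝ) ≠ 0 := by exact_mod_cast hM0.ne'
  rw [Finset.sum_congr rfl fun u hu => swapPages_indicator_sub hab hdisj hj hu k i,
    ← Finset.mul_sum, Finset.sum_sub_distrib, Finset.sum_const, hM, Finset.sum_ite_eq,
    nsmul_eq_mul]
  field_simp

/-- for the one-step flat-architecture cache dynamics started from `c`
(a page `j` is requested with probability `p_j`; a missed page enters list `h_N+1` with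
probability `α` and list `1` with probability `1−α`, exchanging with a uniformly random
page there; a page hit in list `i ∉ {h_N, h}` exchanges with a uniformly random page of
list `i+1`; hits in lists `h_N` and `h` change nothing), the expected one-step change of
the indicator `X_{k,i}` for a middle list `i ∉ {0,1,h_N,h_N+1,h}` equals
`p_k X_{k,i−1} − H_{i−1} X_{k,i}/m_i + H_i X_{k,i+1}/m_{i+1} − p_k X_{k,i}`. -/
theorem flat_expected_one_step_change
    (n h hN : ℕ) (hn : 2 ≤ n) (hh : 4 ≤ h) (hN2 : 2 ≤ hN) (hNh : hN + 2 ≤ h)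
    (α : ℝ) (hα0 : 0 ≤ α) (hα1 : α ≤ 1)
    (p : Fin n → ℝ) (hp : ∀ k, 0 < p k) (hpsum : ∑ k, p k = 1)
    (m : Fin (h+1) → ℕ) (hm : ∀ i, i ≠ 0 → 0 < m i)
    (hmn : ∑ i ∈ Finset.univ.filter (fun i : Fin (h+1) => i ≠ 0), m i < n)
    (c : Fin (h+1) → Finset (Fin n)) (hc : c ∈ cacheConfigs n h m)
    (X : (Fin (h+1) → Finset (Fin n)) → Fin n → Fin (h+1) → ℝ)
    (hX : ∀ c' k i, X c' k i = if k ∈ c' i then 1 else 0)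
    (k : Fin n) (i : Fin (h+1))
    (hi1 : 1 < i.val) (hih : i.val < h) (hiN : i.val ≠ hN) (hiN1 : i.val ≠ hN + 1) :
    (∑ j, p j *
      ((if j ∈ c 0 then
          α * (∑ u ∈ c ⟨hN + 1, by omega⟩,
              (X (swapPages n h c 0 ⟨hN + 1, by omega⟩ j u) k i - X c k i))
            / (m ⟨hN + 1, by omega⟩ : ℝ)
          + (1 - α) * (∑ u ∈ c ⟨1, by omega⟩,
              (X (swapPages n h c 0 ⟨1, by omega⟩ j u) k i - X c k i))
            / (m ⟨1, by omega⟩ : ℝ)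
        else 0)
        + ∑ l ∈ Finset.univ.filter (fun l : Fin (h+1) => 1 ≤ l.val ∧ l.val < h ∧ l.val ≠ hN),
            (if j ∈ c l then
              (∑ u ∈ c (l + 1), (X (swapPages n h c l (l + 1) j u) k i - X c k i))
                / (m (l + 1) : ℝ)
             else 0)))
    = p k * X c k ⟨i.val - 1, by omega⟩
      - (∑ j, p j * X c j ⟨i.val - 1, by omega⟩) * X c k i / (m i : ℝ)
      + (∑ j, p j * X c j i) * X c k ⟨i.val + 1, by omega⟩ / (m ⟨i.val + 1, by omega⟩ : ℝ)
      - p k * X c k i := by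
  classical
  have hcfg : IsCacheConfig n h m c := by
    simpa [cacheConfigs] using hc
  obtain ⟨hcard, hdisj, -⟩ := hcfg
  simp only [hX]
  have hval : ∀ l : Fin (h+1), l.val < h → (l + 1).val = l.val + 1 := fun l hl =>
    Fin.val_add_one_of_lt (Fin.lt_def.mpr (by simpa using hl))
  set a : Fin (h+1) := ⟨i.val - 1, by omega⟩ with ha
  set b : Fin (h+1) := ⟨i.val + 1, by omega⟩ with hb
  have hav : a.val = i.val - 1 := rfl
  have hai : a + 1 = i := Fin.ext (by rw [hval a (by omega)]; omega)
  have hib : i + 1 = b := Fin.ext (by rw [hval i hih])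
  have hane : a ≠ i := fun e => by rw [e] at hav; omega
  have hine : i ≠ b := fun e => by have := congrArg Fin.val e; simp [hb] at this
  have hi0 : i ≠ 0 := fun e => by simp [e] at hi1
  -- A miss exchanges list `0` with list `1` or `hN + 1`, neither of which is list `i`.
  have hmiss : ∀ t : Fin (h+1), t ≠ 0 → i ≠ t → ∀ j ∈ c 0,
      ∑ u ∈ c t, ((if k ∈ swapPages n h c 0 t j u i then 1 else 0 : ℝ)
        - if k ∈ c i then 1 else 0) = 0 := by
    intro t ht hit j hj
    refine Finset.sum_eq_zero fun u hu => ?_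
    rw [swapPages_indicator_sub ht.symm (hdisj _ _ ht.symm) hj hu]
    simp [hi0, hit]
  have hstep : ∀ j, p j *
      ((if j ∈ c 0 then
          α * (∑ u ∈ c ⟨hN + 1, by omega⟩,
              ((if k ∈ swapPages n h c 0 ⟨hN + 1, by omega⟩ j u i then 1 else 0 : ℝ)
                - if k ∈ c i then 1 else 0))
            / (m ⟨hN + 1, by omega⟩ : ℝ)
          + (1 - α) * (∑ u ∈ c ⟨1, by omega⟩,
              ((if k ∈ swapPages n h c 0 ⟨1, by omega⟩ j u i then 1 else 0 : ℝ)
                - if k ∈ c i then 1 else 0))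
            / (m ⟨1, by omega⟩ : ℝ)
        else 0)
        + ∑ l ∈ Finset.univ.filter (fun l : Fin (h+1) => 1 ≤ l.val ∧ l.val < h ∧ l.val ≠ hN),
            (if j ∈ c l then
              (∑ u ∈ c (l + 1), ((if k ∈ swapPages n h c l (l + 1) j u i then 1 else 0 : ℝ)
                - if k ∈ c i then 1 else 0))
                / (m (l + 1) : ℝ)
             else 0))
      = (if k = j then p j * (if j ∈ c a then 1 else 0) else 0)
        - (p j * if j ∈ c a then 1 else 0) * ((if k ∈ c i then 1 else 0) / (m i : ℝ))
        + (p j * if j ∈ c i then 1 else 0) * ((if k ∈ c b then 1 else 0) / (m b : ℝ))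
        - (if k = j then p j * (if j ∈ c i then 1 else 0) else 0) := by
    intro j
    have h0 : ∀ x y : ℝ, (j ∈ c 0 → x = 0) → (if j ∈ c 0 then x else 0) + y = y := by
      intro x y hx
      split_ifs with hj
      · rw [hx hj, zero_add]
      · rw [zero_add]
    rw [h0 _ _ fun hj => by
      rw [hmiss _ (fun e => by simpa using congrArg Fin.val e)
          (fun e => hiN1 (congrArg Fin.val e)) j hj,
        hmiss _ (fun e => by have := congrArg Fin.val e; simp at this)
          (fun e => by have := congrArg Fin.val e; simp at this; omega) j hj]
      simp]
    have hmean : ∀ l : Fin (h+1), l.val < h → ∀ hj : j ∈ c l,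
        (∑ u ∈ c (l + 1), ((if k ∈ swapPages n h c l (l + 1) j u i then 1 else 0 : ℝ)
          - if k ∈ c i then 1 else 0)) / (m (l + 1) : ℝ)
        = ((if i = l then 1 else 0) - if i = l + 1 then 1 else 0)
          * ((if k ∈ c (l + 1) then 1 else 0) / (m (l + 1) : ℝ) - if k = j then 1 else 0) := by
      intro l hl hj
      have hne : l ≠ l + 1 := fun e => by
        have := congrArg Fin.val e
        rw [hval l hl] at this
        omega
      have hl0 : l + 1 ≠ 0 := fun e => by
        have := congrArg Fin.val e
        rw [hval l hl] at this
        simp at this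
      exact swapPages_mean_change hne (hdisj _ _ hne) (hcard _ hl0) (hm _ hl0) hj k i
    -- Only requests hitting list `i - 1` or list `i` affect list `i`.
    rw [Finset.sum_eq_add_of_mem a i (by simp; omega) (by simp; omega) hane]
    · have e1 := hmean a (by omega)
      have e2 := hmean i hih
      rw [hai] at e1 ⊢
      rw [hib] at e2 ⊢
      have hja : j ∈ c a → j ∉ c i := fun hj => Finset.disjoint_left.mp (hdisj _ _ hane) hj
      by_cases hj1 : j ∈ c a
      · have hj2 := hja hj1
        rw [if_pos hj1, e1 hj1]
        simp only [hj1, hj2, hane.symm, if_true, if_false]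
        split_ifs <;> ring
      · by_cases hj2 : j ∈ c i
        · rw [if_neg hj1, if_pos hj2, e2 hj2]
          simp only [hj1, hj2, hine, if_true, if_false]
          split_ifs <;> ring
        · simp [hj1, hj2]
    · intro l hl ⟨hla, hli⟩
      have hlh : l.val < h := (Finset.mem_filter.mp hl).2.2.1
      have hil : i ≠ l + 1 := fun e => hla (Fin.ext (by
        have := congrArg Fin.val e
        rw [hval l hlh] at this
        omega))
      by_cases hj : j ∈ c l
      · rw [if_pos hj, hmean l hlh hj, if_neg (Ne.symm hli), if_neg hil]
        ring
      · rw [if_neg hj]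
  rw [Finset.sum_congr rfl fun j _ => hstep j]
  simp only [Finset.sum_sub_distrib, Finset.sum_add_distrib, ← Finset.sum_mul,
    Finset.sum_ite_eq, Finset.mem_univ, if_true]
  ring
end
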